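/- Assume the potential outcomes setup and suppose X is c-dependent with Y_x for a given x ∈ {0,1} and c ∈ [0,1]. Then for every y ∈ [y̲_x, ȳ_x), P(Y_x ≤ y) ≤ min{ (p_x F_{Y|X}(y|x)/(p_x − c))·1(p_x > c) + 1(p_x ≤ c), (p_x F_{Y|X}(y|x) + c)/(p_x + c), p_x F_{Y|X}(y|x) + (1 − p_x) }. -/

import Mathlib

open MeasureTheory Set

noncomputable section

/-- `X` is `c`-dependent with the real random variable `V`. -/
def CDep {Ω : Type*} [MeasurableSpace Ω] (P : Measure Ω) (X : Ω → ℕ) (V : Ω → ℝ)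
    (c : ℝ) : Prop :=
  ∃ g : ℝ → ℝ, Measurable g ∧ (∀ v, 0 ≤ g v ∧ g v ≤ 1) ∧
    (∀ A : Set ℝ, MeasurableSet A →
      (P ({ω | X ω = 1} ∩ V ⁻¹' A)).toReal = ∫ v in A, g v ∂(Measure.map V P)) ∧
    (∀ᵐ v ∂(Measure.map V P), |g v - (P {ω | X ω = 1}).toReal| ≤ c)

/-- `P(X = x)`. -/
def px {Ω : Type*} [MeasurableSpace Ω] (P : Measure Ω) (X : Ω → ℕ) (x : ℕ) : ℝ :=
  (P {ω | X ω = x}).toReal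

/-- The conditional cdf `y ↦ P(V ≤ y ∣ X = x)`. -/
def condCDF' {Ω : Type*} [MeasurableSpace Ω] (P : Measure Ω) (X : Ω → ℕ) (V : Ω → ℝ)
    (x : ℕ) (y : ℝ) : ℝ :=
  (P ({ω | V ω ≤ y} ∩ {ω | X ω = x})).toReal / (P {ω | X ω = x}).toReal

/-!
The propensity `g` stays within `c` of `P(X = 1)`, so integrating it over `A` bounds the covariance
of `{X = 1}` and `{V ∈ A}` by `c P(V ∈ A)` in absolute value. Complementing either event only flips
the sign of a covariance; hence the bound holds for `{X = 0}` too, and applying it to `{V ≤ y}` and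
to `{V > y}` gives the first two terms of the minimum. The third is a union bound.
-/

theorem abs_setIntegral_sub_const_mul_measureReal_le {α : Type*} [MeasurableSpace α]
    {μ : Measure α} {g : α → ℝ} {A : Set α} {a c : ℝ} (hA : μ A ≠ ⊤)
    (hg : IntegrableOn g A μ) (hgc : ∀ᵐ v ∂μ.restrict A, |g v - a| ≤ c) :
    |∫ v in A, g v ∂μ - a * μ.real A| ≤ c * μ.real A := by
  have hsub : ∫ v in A, (g v - a) ∂μ = ∫ v in A, g v ∂μ - a * μ.real A := by
    rw [integral_sub hg (integrableOn_const hA), setIntegral_const, smul_eq_mul, mul_comm]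
  simp only [← hsub, ← Real.norm_eq_abs] at hgc ⊢
  exact norm_setIntegral_le_of_norm_le_const_ae hA.lt_top hgc

section Events

variable {Ω : Type*} [MeasurableSpace Ω] {P : Measure Ω} {E B : Set Ω} {c : ℝ}

/-- The covariance of (the indicators of) the events `E` and `B`, measuring how far they are from
being independent. -/
def eventCov (P : Measure Ω) (E B : Set Ω) : ℝ :=
  P.real (E ∩ B) - P.real E * P.real B

theorem eventCov_comm : eventCov P E B = eventCov P B E := by
  rw [eventCov, eventCov, inter_comm, mul_comm]

theorem sub_mul_measureReal_le_of_abs_eventCov_le (h : |eventCov P E B| ≤ c * P.real B) :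
    (P.real E - c) * P.real B ≤ P.real (E ∩ B) := by
  have hlower := (abs_le.1 h).1
  rw [eventCov] at hlower
  linarith

variable [IsProbabilityMeasure P]

theorem eventCov_compl_right (hB : MeasurableSet B) : eventCov P E Bᶜ = -eventCov P E B := by
  have hsplit : P.real (E ∩ B) + P.real (E ∩ Bᶜ) = P.real E := measureReal_inter_add_sdiff hB
  rw [eventCov, eventCov, probReal_compl_eq_one_sub hB]
  linear_combination hsplit

theorem eventCov_compl_left (hE : MeasurableSet E) : eventCov P Eᶜ B = -eventCov P E B := by
  rw [eventCov_comm, eventCov_compl_right hE, eventCov_comm]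

theorem add_mul_measureReal_le_of_abs_eventCov_compl_le (hB : MeasurableSet B)
    (h : |eventCov P E Bᶜ| ≤ c * P.real Bᶜ) :
    (P.real E + c) * P.real B ≤ P.real (E ∩ B) + c := by
  rw [eventCov_compl_right hB, abs_neg, probReal_compl_eq_one_sub hB] at h
  have hlower := (abs_le.1 h).1
  rw [eventCov] at hlower
  linarith

theorem measureReal_le_inter_add_one_sub (hE : MeasurableSet E) :
    P.real B ≤ P.real (E ∩ B) + (1 - P.real E) := by
  rw [← probReal_compl_eq_one_sub hE, ← measureReal_inter_add_sdiff (s := B) hE, inter_comm B E]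
  exact add_le_add_right (measureReal_mono (sdiff_subset_compl B E)) _

end Events

section CDependence

theorem setOf_eq_zero_eq_compl {Ω : Type*} {X : Ω → ℕ} (hX01 : ∀ ω, X ω ≤ 1) :
    {ω | X ω = 0} = {ω | X ω = 1}ᶜ := by
  ext ω
  have hω := hX01 ω
  simp only [mem_compl_iff, mem_ofPred_eq]
  omega

variable {Ω : Type*} [MeasurableSpace Ω] {P : Measure Ω} {X : Ω → ℕ} {V Y : Ω → ℝ} {x : ℕ}
  {y c : ℝ} {A : Set ℝ}

theorem px_zero [IsProbabilityMeasure P] (hX : Measurable X) (hX01 : ∀ ω, X ω ≤ 1) :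
    px P X 0 = 1 - px P X 1 := by
  have hX1 : MeasurableSet {ω | X ω = 1} := hX (measurableSet_singleton 1)
  rw [px, setOf_eq_zero_eq_compl hX01]
  exact probReal_compl_eq_one_sub hX1

theorem px_pos [IsProbabilityMeasure P] (hX : Measurable X) (hX01 : ∀ ω, X ω ≤ 1)
    (hp1 : px P X 1 ∈ Ioo (0 : ℝ) 1) (hx : x ≤ 1) : 0 < px P X x := by
  interval_cases x
  · rw [px_zero hX hX01]
    exact sub_pos.2 hp1.2
  · exact hp1.1

theorem px_mul_condCDF' [IsFiniteMeasure P] :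
    px P X x * condCDF' P X V x y = P.real ({ω | X ω = x} ∩ V ⁻¹' Iic y) := by
  rw [inter_comm]
  exact mul_div_cancel_of_imp' fun hpx ↦ measureReal_mono_null inter_subset_right hpx

theorem condCDF'_congr (hY : ∀ ω, X ω = x → Y ω = V ω) :
    condCDF' P X Y x y = condCDF' P X V x y := by
  have hevent : {ω | Y ω ≤ y} ∩ {ω | X ω = x} = {ω | V ω ≤ y} ∩ {ω | X ω = x} := by
    ext ω
    exact and_congr_left fun hω ↦ by rw [mem_ofPred_eq, mem_ofPred_eq, hY ω hω]
  rw [condCDF', condCDF', hevent]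

namespace CDep

theorem abs_eventCov_one_le [IsFiniteMeasure P] (h : CDep P X V c) (hV : Measurable V)
    (hA : MeasurableSet A) :
    |eventCov P {ω | X ω = 1} (V ⁻¹' A)| ≤ c * P.real (V ⁻¹' A) := by
  obtain ⟨g, hg, hg01, hgint, hgc⟩ := h
  have hgi : Integrable g (P.map V) := Integrable.of_mem_Icc 0 1 hg.aemeasurable (ae_of_all _ hg01)
  have hinter : P.real ({ω | X ω = 1} ∩ V ⁻¹' A) = ∫ v in A, g v ∂(P.map V) := hgint A hA
  rw [eventCov, hinter, ← map_measureReal_apply hV hA]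
  exact abs_setIntegral_sub_const_mul_measureReal_le (measure_ne_top _ A) hgi.integrableOn
    (ae_restrict_of_ae hgc)

variable [IsProbabilityMeasure P]

theorem abs_eventCov_le (h : CDep P X V c) (hV : Measurable V) (hX : Measurable X)
    (hX01 : ∀ ω, X ω ≤ 1) (hx : x ≤ 1) (hA : MeasurableSet A) :
    |eventCov P {ω | X ω = x} (V ⁻¹' A)| ≤ c * P.real (V ⁻¹' A) := by
  have hX1 : MeasurableSet {ω | X ω = 1} := hX (measurableSet_singleton 1)
  interval_cases x
  · rw [setOf_eq_zero_eq_compl hX01, eventCov_compl_left hX1, abs_neg]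
    exact h.abs_eventCov_one_le hV hA
  · exact h.abs_eventCov_one_le hV hA

theorem nonneg (h : CDep P X V c) (hV : Measurable V) : 0 ≤ c := by
  simpa using (abs_nonneg _).trans (h.abs_eventCov_one_le hV MeasurableSet.univ)

end CDep

theorem potential_outcome_cdf_upper_bound_general [IsProbabilityMeasure P]
    (hV : Measurable V) (hX : Measurable X) (hX01 : ∀ ω, X ω ≤ 1)
    (hY : ∀ ω, X ω = x → Y ω = V ω) (hx : x ≤ 1) (hpx : 0 < px P X x)
    (hdep : CDep P X V c) (y : ℝ) :
    P.real {ω | V ω ≤ y} ≤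
      min (min
          (if c < px P X x then px P X x * condCDF' P X Y x y / (px P X x - c) else 1)
          ((px P X x * condCDF' P X Y x y + c) / (px P X x + c)))
        (px P X x * condCDF' P X Y x y + (1 - px P X x)) := by
  have hEx : MeasurableSet {ω | X ω = x} := hX (measurableSet_singleton x)
  have hcov {A : Set ℝ} (hA : MeasurableSet A) := hdep.abs_eventCov_le hV hX hX01 hx hA
  rw [condCDF'_congr hY, px_mul_condCDF']
  refine le_min (le_min ?_ ?_) (measureReal_le_inter_add_one_sub hEx)
  · split_ifs with hcp
    · rw [le_div_iff₀' (sub_pos.2 hcp)]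
      exact sub_mul_measureReal_le_of_abs_eventCov_le (hcov measurableSet_Iic)
    · exact measureReal_le_one
  · rw [le_div_iff₀' (add_pos_of_pos_of_nonneg hpx (hdep.nonneg hV))]
    exact add_mul_measureReal_le_of_abs_eventCov_compl_le (hV measurableSet_Iic)
      (hcov measurableSet_Iic.compl)

end CDependence

/-- Upper bound on the cdf of the potential outcome `Y_x` under `c`-dependence:
for `y ∈ [y̲_x, ȳ_x)`,
`P(Y_x ≤ y) ≤ min{ (p_x F(y|x)/(p_x-c))1(p_x>c)+1(p_x≤c), (p_x F(y|x)+c)/(p_x+c),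
p_x F(y|x) + (1-p_x) }`. -/
theorem potential_outcome_cdf_upper_bound {Ω : Type*} [MeasurableSpace Ω]
    (P : Measure Ω) [IsProbabilityMeasure P]
    (Yv : ℕ → Ω → ℝ) (X : Ω → ℕ) (Y : Ω → ℝ)
    (hYm : ∀ x, Measurable (Yv x)) (hXm : Measurable X)
    (hX01 : ∀ ω, X ω ≤ 1)
    (hY : ∀ ω, Y ω = Yv (X ω) ω)
    (hp1 : px P X 1 ∈ Set.Ioo (0:ℝ) 1)
    (lo hi : ℕ → EReal) (hlh : ∀ x ≤ 1, lo x < hi x)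
    (hcont : ∀ x ≤ 1, ∀ x' ≤ 1, Continuous (condCDF' P X (Yv x) x'))
    (hmono : ∀ x ≤ 1, ∀ x' ≤ 1, StrictMonoOn (condCDF' P X (Yv x) x')
      {y : ℝ | lo x ≤ (y : EReal) ∧ (y : EReal) ≤ hi x})
    (hsupp : ∀ x ≤ 1, ∀ x' ≤ 1, ∀ y : ℝ,
      ((y : EReal) ≤ lo x → condCDF' P X (Yv x) x' y = 0) ∧
      (hi x ≤ (y : EReal) → condCDF' P X (Yv x) x' y = 1))
    (x : ℕ) (hx : x ≤ 1) (c : ℝ) (hc : c ∈ Set.Icc (0:ℝ) 1)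
    (hdep : CDep P X (Yv x) c) :
    ∀ y : ℝ, lo x ≤ (y : EReal) → (y : EReal) < hi x →
      (P {ω | Yv x ω ≤ y}).toReal ≤
        min (min
            (if c < px P X x then px P X x * condCDF' P X Y x y / (px P X x - c) else 1)
            ((px P X x * condCDF' P X Y x y + c) / (px P X x + c)))
          (px P X x * condCDF' P X Y x y + (1 - px P X x)) :=
  fun y _ _ ↦ potential_outcome_cdf_upper_bound_general (hYm x) hXm hX01
    (fun ω hω ↦ by rw [hY, hω]) hx (px_pos hXm hX01 hp1 hx) hdep y
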